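/- Let s > 3/2. There exists a constant C (depending on φ and s but not on n) such that for every sufficiently large integer n, the functions f_n(x) = 2^{-ns} φ(x) sin((17/12)·2^n x), g_n(x) = 2^{-n} φ(x), and u_0^n = f_n + g_n satisfy ‖(∂_x u_0^n)²‖_{H^s(ℝ)} ≤ C(1 + 2^{-n(s-2)}). -/

import Mathlib

open MeasureTheory Filter

/-- Fourier transform with convention `f̂(ξ) = ∫ f(x) e^{-i x ξ} dx`. -/
noncomputable def fourierT (f : ℝ → ℂ) (ξ : ℝ) : ℂ :=
  ∫ x : ℝ, f x * Complex.exp (-(Complex.I * x * ξ))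

/-- The `H^s(ℝ)` norm, `‖f‖_{H^s}² = ∫ (1+|ξ|²)^s |f̂(ξ)|² dξ`. -/
noncomputable def sobolevNorm (s : ℝ) (f : ℝ → ℂ) : ℝ :=
  Real.sqrt (∫ ξ : ℝ, (1 + ξ ^ 2) ^ s * ‖fourierT f ξ‖ ^ 2)

/-- Membership in `H^s(ℝ)` (for integrable representatives). -/
def MemSobolev (s : ℝ) (f : ℝ → ℂ) : Prop :=
  MeasureTheory.Integrable f ∧
    MeasureTheory.Integrable (fun ξ : ℝ => (1 + ξ ^ 2) ^ s * ‖fourierT f ξ‖ ^ 2)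

/-- The high-frequency functions `f_n(x) = 2^{-ns} φ(x) sin((17/12)·2^n x)`. -/
noncomputable def fn (s : ℝ) (φ : ℝ → ℂ) (n : ℕ) : ℝ → ℂ :=
  fun x => (((2 : ℝ) ^ (-(n : ℝ) * s) * Real.sin (17 / 12 * 2 ^ n * x) : ℝ) : ℂ) * φ x

/-- The low-frequency functions `g_n(x) = 2^{-n} φ(x)`. -/
noncomputable def gn (φ : ℝ → ℂ) (n : ℕ) : ℝ → ℂ :=
  fun x => (((2 : ℝ) ^ (-(n : ℝ)) : ℝ) : ℂ) * φ x

/-- `φ̂` is an even, real-valued, nonnegative function in `C_c^∞(ℝ)` with `φ̂ = 1` on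
`{|ξ| ≤ 1/4}` and `φ̂ = 0` on `{|ξ| ≥ 1/2}`, and `φ` is the (continuous, integrable)
function on `ℝ` whose Fourier transform is `φ̂`. -/
structure CutoffPair (φhat : ℝ → ℝ) (φ : ℝ → ℂ) : Prop where
  smooth : ContDiff ℝ (⊤ : ℕ∞) φhat
  compactSupport : HasCompactSupport φhat
  even : ∀ ξ : ℝ, φhat (-ξ) = φhat ξ
  nonneg : ∀ ξ : ℝ, 0 ≤ φhat ξ
  eq_one : ∀ ξ : ℝ, |ξ| ≤ 1 / 4 → φhat ξ = 1
  eq_zero : ∀ ξ : ℝ, 1 / 2 ≤ |ξ| → φhat ξ = 0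
  continuous : Continuous φ
  integrable : MeasureTheory.Integrable φ
  fourier_eq : ∀ ξ : ℝ, fourierT φ ξ = (φhat ξ : ℂ)

open scoped FourierTransform SchwartzMap in
lemma fourierT_eq (f : ℝ → ℂ) (ξ : ℝ) : fourierT f ξ = 𝓕 f (ξ / (2 * Real.pi)) := by
  rw [Real.fourier_real_eq_integral_exp_smul, fourierT]
  congr 1; ext x
  rw [smul_eq_mul, mul_comm]
  congr 2
  push_cast
  have : (Real.pi : ℂ) ≠ 0 := by exact_mod_cast Real.pi_ne_zero
  field_simp

lemma fourierT_continuous {f : ℝ → ℂ} (hf : Integrable f) : Continuous (fourierT f) := by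
  have h : Continuous (FourierTransform.fourier f : ℝ → ℂ) :=
    VectorFourier.fourierIntegral_continuous Real.continuous_fourierChar
      (by exact continuous_inner) hf
  have : fourierT f = fun ξ => FourierTransform.fourier f (ξ / (2 * Real.pi)) := by
    ext ξ; exact fourierT_eq f ξ
  rw [this]
  fun_prop

lemma integrable_mul_exp {f : ℝ → ℂ} (hf : Integrable f) (b : ℝ) :
    Integrable (fun x : ℝ => f x * Complex.exp (Complex.I * x * b)) := by
  refine hf.mul_bdd (c := 1) (by fun_prop) (ae_of_all _ fun x => ?_)
  have : Complex.I * x * b = ((x * b : ℝ) : ℂ) * Complex.I := by push_cast; ring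
  rw [this, Complex.norm_exp_ofReal_mul_I]

lemma integrable_mul_exp' {f : ℝ → ℂ} (hf : Integrable f) (b : ℝ) :
    Integrable (fun x : ℝ => f x * Complex.exp (-(Complex.I * x * b))) := by
  convert integrable_mul_exp hf (-b) using 4
  push_cast; ring

lemma fourierT_add {f g : ℝ → ℂ} (hf : Integrable f) (hg : Integrable g) (ξ : ℝ) :
    fourierT (fun x => f x + g x) ξ = fourierT f ξ + fourierT g ξ := by
  simp only [fourierT, add_mul]
  exact integral_add (integrable_mul_exp' hf ξ) (integrable_mul_exp' hg ξ)

lemma fourierT_const_mul (c : ℂ) (f : ℝ → ℂ) (ξ : ℝ) :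
    fourierT (fun x => c * f x) ξ = c * fourierT f ξ := by
  simp only [fourierT, mul_assoc]
  exact integral_const_mul _ _

lemma fourierT_mod (f : ℝ → ℂ) (b ξ : ℝ) :
    fourierT (fun x => f x * Complex.exp (Complex.I * x * b)) ξ = fourierT f (ξ - b) := by
  simp only [fourierT]
  congr 1; ext x
  rw [mul_assoc, ← Complex.exp_add]
  congr 2; push_cast; ring

/-- Quantitative membership in the Sobolev space. -/
def SobB (s : ℝ) (f : ℝ → ℂ) (M : ℝ) : Prop :=
  MemSobolev s f ∧ ∫ ξ : ℝ, (1 + ξ ^ 2) ^ s * ‖fourierT f ξ‖ ^ 2 ≤ M ^ 2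

lemma weight_continuous (s : ℝ) : Continuous (fun ξ : ℝ => (1 + ξ ^ 2) ^ s) :=
  (by fun_prop : Continuous fun ξ : ℝ => 1 + ξ ^ 2).rpow_const
    (fun x => Or.inl (by positivity))

lemma SobB.add {s : ℝ} {f g : ℝ → ℂ} {M N : ℝ} (hM : 0 ≤ M) (hN : 0 ≤ N)
    (hf : SobB s f M) (hg : SobB s g N) : SobB s (fun x => f x + g x) (2 * (M + N)) := by
  obtain ⟨⟨hf1, hf2⟩, hf3⟩ := hf
  obtain ⟨⟨hg1, hg2⟩, hg3⟩ := hg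
  have hle : ∀ ξ : ℝ, (1 + ξ ^ 2) ^ s * ‖fourierT (fun x => f x + g x) ξ‖ ^ 2 ≤
      2 * ((1 + ξ ^ 2) ^ s * ‖fourierT f ξ‖ ^ 2) + 2 * ((1 + ξ ^ 2) ^ s * ‖fourierT g ξ‖ ^ 2) := by
    intro ξ
    rw [fourierT_add hf1 hg1]
    have h1 : ‖fourierT f ξ + fourierT g ξ‖ ^ 2 ≤ 2 * ‖fourierT f ξ‖ ^ 2 + 2 * ‖fourierT g ξ‖ ^ 2 := by
      have := norm_add_le (fourierT f ξ) (fourierT g ξ)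
      nlinarith [norm_nonneg (fourierT f ξ + fourierT g ξ), sq_nonneg (‖fourierT f ξ‖ - ‖fourierT g ξ‖)]
    have hw : 0 ≤ (1 + ξ ^ 2) ^ s := by positivity
    nlinarith [mul_le_mul_of_nonneg_left h1 hw]
  have hint := (hf2.const_mul 2).add (hg2.const_mul 2)
  have hI : Integrable (fun ξ : ℝ => (1 + ξ ^ 2) ^ s * ‖fourierT (fun x => f x + g x) ξ‖ ^ 2) := by
    refine hint.mono' ?_ (ae_of_all _ fun ξ => ?_)
    · exact ((weight_continuous s).mul ((fourierT_continuous (hf1.add hg1)).norm.pow 2)).aestronglyMeasurable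
    · rw [Real.norm_of_nonneg (by positivity)]; exact hle ξ
  refine ⟨⟨hf1.add hg1, hI⟩, ?_⟩
  have := integral_mono hI hint hle
  rw [integral_add' (hf2.const_mul 2) (hg2.const_mul 2), integral_const_mul, integral_const_mul] at this
  nlinarith [mul_nonneg hM hN]

lemma SobB.const_mul {s : ℝ} {f : ℝ → ℂ} {M : ℝ} (c : ℂ)
    (hf : SobB s f M) : SobB s (fun x => c * f x) (‖c‖ * M) := by
  obtain ⟨⟨hf1, hf2⟩, hf3⟩ := hf
  have : (fun ξ : ℝ => (1 + ξ ^ 2) ^ s * ‖fourierT (fun x => c * f x) ξ‖ ^ 2) =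
      fun ξ : ℝ => ‖c‖ ^ 2 * ((1 + ξ ^ 2) ^ s * ‖fourierT f ξ‖ ^ 2) := by
    ext ξ; rw [fourierT_const_mul, norm_mul]; ring
  refine ⟨⟨hf1.const_mul c, by rw [this]; exact hf2.const_mul _⟩, ?_⟩
  rw [this, integral_const_mul, mul_pow]
  gcongr

lemma SobB.mono {s : ℝ} {f : ℝ → ℂ} {M N : ℝ} (hM : 0 ≤ M) (h : M ≤ N)
    (hf : SobB s f M) : SobB s f N :=
  ⟨hf.1, hf.2.trans (by gcongr)⟩

lemma SobB.mod {s : ℝ} (hs : 0 ≤ s) {f : ℝ → ℂ} {M : ℝ} (b : ℝ)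
    (hf : SobB s f M) : SobB s (fun x => f x * Complex.exp (Complex.I * x * b))
      ((2 * (1 + b ^ 2)) ^ (s / 2) * M) := by
  obtain ⟨⟨hf1, hf2⟩, hf3⟩ := hf
  have hle : ∀ ξ : ℝ, (1 + ξ ^ 2) ^ s * ‖fourierT f (ξ - b)‖ ^ 2 ≤
      (2 * (1 + b ^ 2)) ^ s * ((1 + (ξ - b) ^ 2) ^ s * ‖fourierT f (ξ - b)‖ ^ 2) := by
    intro ξ
    rw [← mul_assoc, ← Real.mul_rpow (by positivity) (by positivity)]
    gcongr
    nlinarith [sq_nonneg (ξ - 2 * b), sq_nonneg (b * (ξ - b))]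
  have hint := (hf2.comp_sub_right b).const_mul ((2 * (1 + b ^ 2)) ^ s)
  have hI : Integrable (fun ξ : ℝ => (1 + ξ ^ 2) ^ s * ‖fourierT f (ξ - b)‖ ^ 2) := by
    refine hint.mono' ?_ (ae_of_all _ fun ξ => ?_)
    · exact ((weight_continuous s).mul
        (((fourierT_continuous hf1).comp (by fun_prop : Continuous fun ξ : ℝ => ξ - b)).norm.pow 2)).aestronglyMeasurable
    · rw [Real.norm_of_nonneg (by positivity)]; exact hle ξ
  refine ⟨⟨integrable_mul_exp hf1 b, by simpa only [fourierT_mod] using hI⟩, ?_⟩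
  simp only [fourierT_mod]
  refine (integral_mono hI hint hle).trans ?_
  rw [integral_const_mul, integral_sub_right_eq_self
    (fun ξ : ℝ => (1 + ξ ^ 2) ^ s * ‖fourierT f ξ‖ ^ 2), mul_pow, ← Real.rpow_natCast (_ ^ (s / 2)),
    ← Real.rpow_mul (by positivity)]
  norm_num
  gcongr

open scoped SchwartzMap FourierTransform

lemma schwartz_SobB (s : ℝ) (ψ : 𝓢(ℝ, ℂ)) : ∃ M, 0 ≤ M ∧ SobB s ψ M := by
  have hpi : (2 * Real.pi)⁻¹ ≠ 0 := by positivity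
  let e : ℝ ≃L[ℝ] ℝ := ContinuousLinearEquiv.unitsEquivAut ℝ (Units.mk0 _ hpi)
  let H : 𝓢(ℝ, ℂ) := SchwartzMap.compCLMOfContinuousLinearEquiv ℂ e (𝓕 ψ)
  have hH : ∀ ξ, fourierT ψ ξ = H ξ := by
    intro ξ
    rw [fourierT_eq]
    simp [H, e, SchwartzMap.fourier_coe, div_eq_mul_inv]
  have hw : (fun x : ℝ => (1 + ‖x‖ ^ 2) ^ s).HasTemperateGrowth :=
    Function.hasTemperateGrowth_one_add_norm_sq_rpow ℝ s
  let K : 𝓢(ℝ, ℂ) := SchwartzMap.smulLeftCLM ℂ (fun x : ℝ => (1 + ‖x‖ ^ 2) ^ s) H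
  have hK : ∀ ξ, K ξ = ((1 + ‖ξ‖ ^ 2) ^ s) • H ξ := fun ξ =>
    SchwartzMap.smulLeftCLM_apply_apply hw H ξ
  obtain ⟨c, hc⟩ : ∃ c, ∀ x, ‖H x‖ ≤ c := by
    obtain ⟨c, -, hc⟩ := H.decay 0 0
    exact ⟨c, by simpa using hc⟩
  have hI : Integrable (fun ξ : ℝ => (1 + ξ ^ 2) ^ s * ‖fourierT ψ ξ‖ ^ 2) := by
    have h1 : Integrable (fun ξ => ‖K ξ‖ * ‖H ξ‖) :=
      K.integrable.norm.mul_bdd (c := c) (H.continuous.norm.aestronglyMeasurable)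
        (ae_of_all _ fun x => by simpa using hc x)
    refine h1.congr (ae_of_all _ fun ξ => ?_)
    simp only [hK, hH, norm_smul, Real.norm_eq_abs, sq_abs]
    rw [abs_of_nonneg (by positivity)]; ring
  refine ⟨√(∫ ξ : ℝ, (1 + ξ ^ 2) ^ s * ‖fourierT ψ ξ‖ ^ 2), by positivity,
    ⟨ψ.integrable, hI⟩, ?_⟩
  rw [Real.sq_sqrt]
  exact integral_nonneg fun ξ => by positivity

lemma CutoffPair.schwartz {φhat : ℝ → ℝ} {φ : ℝ → ℂ} (h : CutoffPair φhat φ) :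
    ∃ Φ : 𝓢(ℝ, ℂ), ∀ x, φ x = Φ x := by
  have hpi : (2 * Real.pi) ≠ 0 := by positivity
  have hF : ∀ ξ, 𝓕 φ ξ = (φhat (2 * Real.pi * ξ) : ℂ) := by
    intro ξ
    rw [← h.fourier_eq, fourierT_eq, mul_div_cancel_left₀ _ hpi]
  have hs : ContDiff ℝ (⊤ : ℕ∞) (𝓕 φ) := by
    have : 𝓕 φ = fun ξ => (φhat (2 * Real.pi * ξ) : ℂ) := funext hF
    rw [this]
    exact Complex.ofRealCLM.contDiff.comp (h.smooth.comp (by fun_prop))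
  have hc : HasCompactSupport (𝓕 φ) := by
    refine HasCompactSupport.intro (isCompact_Icc (a := (-1 : ℝ)) (b := 1)) fun x hx => ?_
    rw [hF, h.eq_zero]; · simp
    rw [abs_mul, abs_of_pos Real.two_pi_pos]
    have : 1 < |x| := by
      by_contra! hh; exact hx (abs_le.mp hh)
    nlinarith [Real.pi_gt_three]
  let G : 𝓢(ℝ, ℂ) := hc.toSchwartzMap hs
  refine ⟨𝓕⁻ G, fun x => ?_⟩
  have hGc : (G : ℝ → ℂ) = 𝓕 φ := rfl
  rw [SchwartzMap.fourierInv_coe, hGc,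
    h.continuous.fourierInv_fourier_eq h.integrable (by rw [← hGc]; exact G.integrable)]

/-- The growth factor in the claimed bound. -/
noncomputable def growth (s : ℝ) (n : ℕ) : ℝ := 1 + (2 : ℝ) ^ (-(n : ℝ) * (s - 2))

lemma growth_pos (s : ℝ) (n : ℕ) : 0 < growth s n := by unfold growth; positivity

/-- Sequences whose Sobolev norms are controlled by the growth factor. -/
def Good (s : ℝ) (F : ℕ → ℝ → ℂ) : Prop :=
  ∃ C, 0 ≤ C ∧ ∀ n, SobB s (F n) (C * growth s n)

lemma Good.add {s : ℝ} {F G : ℕ → ℝ → ℂ} (hF : Good s F) (hG : Good s G) :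
    Good s (fun n x => F n x + G n x) := by
  obtain ⟨C, hC, h1⟩ := hF
  obtain ⟨D, hD, h2⟩ := hG
  refine ⟨2 * (C + D), by positivity, fun n => ?_⟩
  have := growth_pos s n
  have h := SobB.add (by positivity) (by positivity) (h1 n) (h2 n)
  convert h using 1; ring

lemma good_exp {s : ℝ} (hs : 0 ≤ s) (ψ : 𝓢(ℝ, ℂ)) (c : ℕ → ℂ) (b : ℕ → ℝ) (D : ℝ)
    (h : ∀ n, ‖c n‖ * (2 * (1 + b n ^ 2)) ^ (s / 2) ≤ D * growth s n) :
    Good s (fun n x => c n * (ψ x * Complex.exp (Complex.I * x * b n))) := by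
  obtain ⟨M, hM, hψ⟩ := schwartz_SobB s ψ
  have hD : 0 ≤ D := by
    have h0 := h 0
    have h1 := growth_pos s 0
    by_contra! hD
    have : 0 ≤ ‖c 0‖ * (2 * (1 + b 0 ^ 2)) ^ (s / 2) := by positivity
    nlinarith
  refine ⟨D * M, by positivity, fun n => ?_⟩
  refine SobB.mono (by positivity) ?_ ((hψ.mod hs (b n)).const_mul (c n))
  nlinarith [mul_le_mul_of_nonneg_right (h n) hM]

lemma good_cos {s : ℝ} (hs : 0 ≤ s) (ψ : 𝓢(ℝ, ℂ)) (c : ℕ → ℝ) (b : ℕ → ℝ) (D : ℝ)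
    (h : ∀ n, |c n| * (2 * (1 + b n ^ 2)) ^ (s / 2) ≤ D * growth s n) :
    Good s (fun n x => (c n : ℂ) * (ψ x * (Real.cos (b n * x) : ℂ))) := by
  have h1 := good_exp hs ψ (fun n => (c n : ℂ) / 2) b (D / 2) (fun n => by
    have := h n
    simp only [norm_div, Complex.norm_real, Real.norm_eq_abs, Complex.norm_ofNat]; linarith)
  have h2 := good_exp hs ψ (fun n => (c n : ℂ) / 2) (fun n => - b n) (D / 2) (fun n => by
    have := h n
    simp only [norm_div, Complex.norm_real, Real.norm_eq_abs, Complex.norm_ofNat, neg_sq]; linarith)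
  convert h1.add h2 using 3 with n x
  push_cast
  rw [Complex.cos]
  have e1 : (b n : ℂ) * x * Complex.I = Complex.I * x * b n := by ring
  have e2 : -((b n : ℂ) * x) * Complex.I = Complex.I * x * -b n := by ring
  rw [e1, e2]; ring

lemma good_sin {s : ℝ} (hs : 0 ≤ s) (ψ : 𝓢(ℝ, ℂ)) (c : ℕ → ℝ) (b : ℕ → ℝ) (D : ℝ)
    (h : ∀ n, |c n| * (2 * (1 + b n ^ 2)) ^ (s / 2) ≤ D * growth s n) :
    Good s (fun n x => (c n : ℂ) * (ψ x * (Real.sin (b n * x) : ℂ))) := by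
  have h1 := good_exp hs ψ (fun n => -(c n : ℂ) * Complex.I / 2) b (D / 2) (fun n => by
    have := h n
    simp only [norm_div, norm_mul, norm_neg, Complex.norm_I, mul_one, Complex.norm_real,
      Real.norm_eq_abs, Complex.norm_ofNat]
    linarith)
  have h2 := good_exp hs ψ (fun n => (c n : ℂ) * Complex.I / 2) (fun n => - b n) (D / 2) (fun n => by
    have := h n
    simp only [norm_div, norm_mul, Complex.norm_I, mul_one, Complex.norm_real,
      Real.norm_eq_abs, Complex.norm_ofNat, neg_sq]
    linarith)
  convert h1.add h2 using 3 with n x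
  push_cast
  rw [Complex.sin]
  have e1 : (b n : ℂ) * x * Complex.I = Complex.I * x * b n := by ring
  have e2 : -((b n : ℂ) * x) * Complex.I = Complex.I * x * -b n := by ring
  rw [e1, e2]; ring

lemma weight_bound {s : ℝ} (hs : 0 ≤ s) (n : ℕ) (b c D : ℝ) (hb : |b| ≤ 4 * 2 ^ n)
    (hc : |c| ≤ D * growth s n * (2 : ℝ) ^ (-(n : ℝ) * s)) :
    |c| * (2 * (1 + b ^ 2)) ^ (s / 2) ≤ ((34 : ℝ) ^ (s / 2) * D) * growth s n := by
  have hX : (1 : ℝ) ≤ 2 ^ n := one_le_pow₀ (by norm_num)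
  have h1 : 2 * (1 + b ^ 2) ≤ 34 * (2 : ℝ) ^ (2 * (n : ℝ)) := by
    have e : (2 : ℝ) ^ (2 * (n : ℝ)) = (2 ^ n) ^ 2 := by
      rw [mul_comm, Real.rpow_mul (by norm_num), Real.rpow_natCast]; norm_num
    rw [e, ← sq_abs b]
    nlinarith [abs_nonneg b]
  have h2 : (2 * (1 + b ^ 2)) ^ (s / 2) ≤ (34 : ℝ) ^ (s / 2) * (2 : ℝ) ^ ((n : ℝ) * s) := by
    calc _ ≤ (34 * (2 : ℝ) ^ (2 * (n : ℝ))) ^ (s / 2) := by gcongr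
      _ = _ := by
        rw [Real.mul_rpow (by positivity) (by positivity), ← Real.rpow_mul (by norm_num)]
        congr 2; ring
  have h3 : (2 : ℝ) ^ (-(n : ℝ) * s) * (2 : ℝ) ^ ((n : ℝ) * s) = 1 := by
    rw [← Real.rpow_add (by norm_num)]; norm_num
  calc _ ≤ (D * growth s n * (2 : ℝ) ^ (-(n : ℝ) * s)) *
        ((34 : ℝ) ^ (s / 2) * (2 : ℝ) ^ ((n : ℝ) * s)) := by
        gcongr
        exact (abs_nonneg _).trans hc
    _ = (34 : ℝ) ^ (s / 2) * D * growth s n *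
        ((2 : ℝ) ^ (-(n : ℝ) * s) * (2 : ℝ) ^ ((n : ℝ) * s)) := by ring
    _ = _ := by rw [h3, mul_one]

lemma exists_mul (f g : 𝓢(ℝ, ℂ)) : ∃ h : 𝓢(ℝ, ℂ), ∀ x, h x = f x * g x :=
  ⟨SchwartzMap.smulLeftCLM ℂ f g, fun x => by
    rw [SchwartzMap.smulLeftCLM_apply_apply f.hasTemperateGrowth, smul_eq_mul]⟩

lemma good_main {s : ℝ} (hs : 3 / 2 < s) (Φ : 𝓢(ℝ, ℂ)) :
    Good s (fun n x => (deriv (fun y => fn s Φ n y + gn Φ n y) x) ^ 2) := by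
  have hs0 : 0 ≤ s := by linarith
  let Ψ : 𝓢(ℝ, ℂ) := SchwartzMap.derivCLM ℂ ℂ Φ
  have hΨ : ∀ x, HasDerivAt Φ (Ψ x) x := fun x => Φ.differentiableAt.hasDerivAt
  obtain ⟨A, hA⟩ := exists_mul Φ Φ
  obtain ⟨B, hB⟩ := exists_mul Φ Ψ
  obtain ⟨E, hE⟩ := exists_mul Ψ Ψ
  let p : ℕ → ℝ := fun n => (2 : ℝ) ^ (-(n : ℝ) * s)
  let q : ℕ → ℝ := fun n => (2 : ℝ) ^ (-(n : ℝ))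
  let a : ℕ → ℝ := fun n => 17 / 12 * 2 ^ n
  have hX : ∀ n : ℕ, (1 : ℝ) ≤ 2 ^ n := fun n => one_le_pow₀ (by norm_num)
  have hp : ∀ n, 0 < p n := fun n => by simp only [p]; positivity
  have hq : ∀ n, 0 < q n := fun n => by simp only [q]; positivity
  have hqX : ∀ n, q n * 2 ^ n = 1 := fun n => by
    simp only [q]
    rw [← Real.rpow_natCast, ← Real.rpow_add (by norm_num)]; norm_num
  have hq1 : ∀ n, q n ≤ 1 := fun n => by nlinarith [hX n, hqX n, hq n]
  have hg : ∀ n, growth s n = 1 + p n * (2 ^ n) ^ 2 := fun n => by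
    simp only [growth, p]
    have e : ((2 : ℝ) ^ n) ^ 2 = (2 : ℝ) ^ (2 * (n : ℝ)) := by
      rw [mul_comm, Real.rpow_mul (by norm_num), Real.rpow_natCast]; norm_num
    rw [e, ← Real.rpow_add (by norm_num)]
    congr 2; ring
  have hb0 : ∀ n, |(0 : ℝ)| ≤ 4 * 2 ^ n := fun n => by simp
  have hb1 : ∀ n, |a n| ≤ 4 * 2 ^ n := fun n => by
    rw [abs_of_nonneg (by simp only [a]; positivity)]; simp only [a]; linarith [hX n]
  have hb2 : ∀ n, |2 * a n| ≤ 4 * 2 ^ n := fun n => by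
    rw [abs_of_nonneg (by simp only [a]; positivity)]; simp only [a]; linarith [hX n]
  -- coefficient bounds
  have key1 : ∀ n, ∀ c : ℝ, 0 ≤ c → c ≤ 3 → |c * p n| ≤ 3 * growth s n * p n := fun n c h0 h => by
    rw [abs_of_nonneg (mul_nonneg h0 (hp n).le)]
    have : c ≤ 3 * growth s n := by
      rw [hg]; nlinarith [mul_pos (hp n) (by positivity : (0 : ℝ) < (2 ^ n) ^ 2)]
    exact mul_le_mul_of_nonneg_right this (hp n).le
  have key2 : ∀ n, ∀ c : ℝ, 0 ≤ c → c ≤ 3 * (2 ^ n) ^ 2 → |c * p n ^ 2| ≤ 3 * growth s n * p n :=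
    fun n c h0 h => by
      rw [abs_of_nonneg (mul_nonneg h0 (by positivity)), hg]
      have := mul_le_mul_of_nonneg_right h (hp n).le
      nlinarith [hp n]
  have c2 : ∀ n, |2 * q n * p n| ≤ 3 * growth s n * p n := fun n =>
    key1 n _ (by linarith [hq n]) (by linarith [hq1 n])
  have c3 : ∀ n, |1 / 2 * p n ^ 2| ≤ 3 * growth s n * p n := fun n =>
    key2 n _ (by norm_num) (by nlinarith [hX n])
  have c4 : ∀ n, |-(1 / 2 * p n ^ 2)| ≤ 3 * growth s n * p n := fun n => by
    rw [abs_neg]; exact c3 n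
  have c5 : ∀ n, |(2 * q n * a n) * p n| ≤ 3 * growth s n * p n := fun n =>
    key1 n _ (by have := hq n; simp only [a]; positivity) (by simp only [a]; linarith [hqX n])
  have c6 : ∀ n, |a n * p n ^ 2| ≤ 3 * growth s n * p n := fun n =>
    key2 n _ (by simp only [a]; positivity) (by simp only [a]; nlinarith [hX n])
  have c7 : ∀ n, |(a n ^ 2 / 2) * p n ^ 2| ≤ 3 * growth s n * p n := fun n =>
    key2 n _ (by positivity) (by simp only [a]; nlinarith [hX n])
  have T1 := good_cos hs0 E (fun n => q n ^ 2) (fun _ => 0) ((2 : ℝ) ^ (s / 2)) (fun n => by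
    have h1 : |q n ^ 2| ≤ 1 := by
      rw [abs_of_nonneg (by positivity)]; nlinarith [hq1 n, hq n]
    have h2 : 1 ≤ growth s n := by
      rw [hg]; have := hp n; nlinarith [mul_pos (hp n) (by positivity : (0 : ℝ) < (2 ^ n) ^ 2)]
    have h3 : (0 : ℝ) < 2 ^ (s / 2) := by positivity
    norm_num only
    nlinarith)
  have T2 := good_sin hs0 E _ a _ (fun n => weight_bound hs0 n _ _ 3 (hb1 n) (c2 n))
  have T3 := good_cos hs0 E _ (fun _ => 0) _ (fun n => weight_bound hs0 n _ _ 3 (hb0 n) (c3 n))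
  have T4 := good_cos hs0 E _ _ _ (fun n => weight_bound hs0 n _ _ 3 (hb2 n) (c4 n))
  have T5 := good_cos hs0 B _ _ _ (fun n => weight_bound hs0 n _ _ 3 (hb1 n) (c5 n))
  have T6 := good_sin hs0 B _ _ _ (fun n => weight_bound hs0 n _ _ 3 (hb2 n) (c6 n))
  have T7 := good_cos hs0 A _ (fun _ => 0) _ (fun n => weight_bound hs0 n _ _ 3 (hb0 n) (c7 n))
  have T8 := good_cos hs0 A _ _ _ (fun n => weight_bound hs0 n _ _ 3 (hb2 n) (c7 n))
  convert ((((((T1.add T2).add T3).add T4).add T5).add T6).add T7).add T8 using 3 with n x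
  have hd : HasDerivAt (fun y => fn s Φ n y + gn Φ n y)
      (((p n * (Real.cos (a n * x) * a n) : ℝ) : ℂ) * Φ x + ((p n * Real.sin (a n * x) : ℝ) : ℂ) * Ψ x
        + (q n : ℂ) * Ψ x) x := by
    have h1 : HasDerivAt (fun y : ℝ => a n * y) (a n) x := by
      simpa using (hasDerivAt_id x).const_mul (a n)
    have h2 : HasDerivAt (fun y : ℝ => ((p n * Real.sin (a n * y) : ℝ) : ℂ))
        ((p n * (Real.cos (a n * x) * a n) : ℝ) : ℂ) x := (h1.sin.const_mul (p n)).ofReal_comp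
    exact (h2.mul (hΨ x)).add ((hΨ x).const_mul (q n : ℂ))
  rw [hd.deriv, hA, hB, hE]
  have e1 : Real.cos (2 * a n * x) = 2 * Real.cos (a n * x) ^ 2 - 1 := by
    rw [mul_assoc, Real.cos_two_mul]
  have e2 : Real.sin (2 * a n * x) = 2 * Real.sin (a n * x) * Real.cos (a n * x) := by
    rw [mul_assoc, Real.sin_two_mul]
  have e3 : (Real.sin (a n * x) : ℂ) ^ 2 = 1 - (Real.cos (a n * x) : ℂ) ^ 2 := by
    exact_mod_cast Real.sin_sq (a n * x)
  rw [e1, e2, zero_mul, Real.cos_zero]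
  push_cast at e3 ⊢
  linear_combination (p n : ℂ) ^ 2 * Ψ x ^ 2 * e3

/-- For `s > 3/2` there is `C` (independent of `n`) such that, with `u_0^n = f_n + g_n`,
`‖(∂_x u_0^n)²‖_{H^s} ≤ C(1 + 2^{-n(s-2)})` for all sufficiently large `n`. -/
theorem sq_deriv_u0n_bound (s : ℝ) (hs : 3 / 2 < s) (φhat : ℝ → ℝ) (φ : ℝ → ℂ)
    (hφ : CutoffPair φhat φ) :
    ∃ C : ℝ, 0 < C ∧ ∃ N : ℕ, ∀ n : ℕ, N ≤ n →
      sobolevNorm s (fun x => (deriv (fun y => fn s φ n y + gn φ n y) x) ^ 2)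
        ≤ C * (1 + (2 : ℝ) ^ (-(n : ℝ) * (s - 2))) := by
  obtain ⟨Φ, hΦ⟩ := hφ.schwartz
  obtain rfl : φ = Φ := funext hΦ
  obtain ⟨C, hC, h⟩ := good_main hs Φ
  refine ⟨C + 1, by positivity, 0, fun n _ => ?_⟩
  have hg := growth_pos s n
  have : sobolevNorm s (fun x => (deriv (fun y => fn s Φ n y + gn Φ n y) x) ^ 2)
      ≤ C * growth s n := by
    unfold sobolevNorm
    exact Real.sqrt_le_iff.mpr ⟨by positivity, (h n).2⟩
  refine this.trans ?_
  change C * growth s n ≤ (C + 1) * growth s n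
  gcongr
  linarith
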